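/- Let S ⊆ ℂⁿ be a locally closed set admitting a finite filtration S = S₀ ⊇ S₁ ⊇ ⋯ ⊇ S_m ⊇ S_{m+1} = ∅ by subsets, each S_k closed in S, such that for every k ∈ {0, …, m} the difference S_k ∖ S_{k+1} is a totally real C¹ embedded submanifold of ℂⁿ (possibly with components of different dimensions): for every p ∈ S_k ∖ S_{k+1} there exist an open neighborhood V of p in ℂⁿ, an integer d ≥ 0, an open set Ω ⊆ ℝᵈ, and a C¹ map g : Ω → ℂⁿ that is a homeomorphism onto (S_k ∖ S_{k+1}) ∩ V and whose real Fréchet derivative Dg(t) is injective with totally real range at every t ∈ Ω. Then there exist an open set U ⊆ ℂⁿ with S ⊆ U and a C² function ρ : U → ℝ that is strongly plurisubharmonic at every point of U. -/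

import Mathlib

open Topology

/-- The Levi form of a function `ρ : E → ℝ` on a complex normed space `E` at a
point `x`, evaluated on a vector `v`:
`L_ρ(x; v) = (1/4)(D²ρ(x)(v,v) + D²ρ(x)(iv,iv))`,
where `D²ρ(x)` is the second real Fréchet derivative. -/
noncomputable def leviForm {E : Type*} [NormedAddCommGroup E] [NormedSpace ℂ E]
    (ρ : E → ℝ) (x v : E) : ℝ :=
  (1/4) * (fderiv ℝ (fderiv ℝ ρ) x v v
    + fderiv ℝ (fderiv ℝ ρ) x (Complex.I • v) (Complex.I • v))

/-!
Near a point `p` of a totally real submanifold `M`, let `l₁, …, l_k` be the real functionals cutting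
out `T_p M`. Since `T_p M ∩ i T_p M = 0`, the function `∑ l_j²` has positive definite Levi form.
Each `l_j` has a small Lipschitz constant `κ` on `M` near `p`, so `M` lies close to the zero set of
`l_j - h`, where `h` is a mollification at scale `s` of a `κ`-Lipschitz extension of `l_j|_M`. Along
`M` the function `(l_j - h)²` is `O(κ² s²)` with gradient `O(κ s)`, while its Hessian still
dominates that of `l_j²` up to `O(κ²)`. It can therefore be multiplied by an arbitrarily large
cutoff function: as `s → 0`, the terms in which the cutoff is differentiated disappear along `M`.

The function `ρ` is built from the deepest stratum upwards. A locally finite family of such bumps,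
supported off the strata already treated, makes the Levi form positive along the next stratum, and
the negative part of each bump is chosen small relative to the Levi form already there.
-/

open Filter Set
open scoped NNReal

section Mollification

open MeasureTheory ContinuousLinearMap
open scoped ContDiff Convolution

variable {E F : Type*} [NormedAddCommGroup E] [NormedAddCommGroup F] [NormedSpace ℝ F]

theorem norm_convolution_sub_le_of_lipschitzWith {𝕜 F₁ F₂ : Type*} [NontriviallyNormedField 𝕜]
    [NormedSpace 𝕜 F] [NormedAddCommGroup F₁] [NormedSpace 𝕜 F₁] [NormedAddCommGroup F₂]
    [NormedSpace 𝕜 F₂] [MeasurableSpace E] [BorelSpace E] {μ : Measure E}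
    [IsFiniteMeasureOnCompacts μ] {k : E → F₁} {H : E → F₂} {κ : ℝ≥0}
    (L : F₁ →L[𝕜] F₂ →L[𝕜] F) (hk : Continuous k) (hkc : HasCompactSupport k)
    (hH : LipschitzWith κ H) (x y : E) :
    ‖(k ⋆[L, μ] H) x - (k ⋆[L, μ] H) y‖ ≤ ‖L‖ * (∫ t, ‖k t‖ ∂μ) * κ * ‖x - y‖ := by
  have hint : Integrable k μ := hk.integrable_of_hasCompactSupport hkc
  have hconv : ConvolutionExists k H L μ :=
    hkc.convolutionExists_left_of_continuous_right L hint.locallyIntegrable hH.continuous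
  have hpointwise (t : E) :
      ‖L (k t) (H (x - t)) - L (k t) (H (y - t))‖ ≤ ‖L‖ * κ * ‖x - y‖ * ‖k t‖ :=
    calc ‖L (k t) (H (x - t)) - L (k t) (H (y - t))‖
      _ = ‖L (k t) (H (x - t) - H (y - t))‖ := by rw [map_sub]
      _ ≤ ‖L‖ * ‖k t‖ * ‖H (x - t) - H (y - t)‖ := L.le_opNorm₂ _ _
      _ ≤ ‖L‖ * ‖k t‖ * (κ * ‖x - y‖) := by
        gcongr
        simpa only [sub_sub_sub_cancel_right] using hH.norm_sub_le (x - t) (y - t)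
      _ = ‖L‖ * κ * ‖x - y‖ * ‖k t‖ := by ring
  calc ‖(k ⋆[L, μ] H) x - (k ⋆[L, μ] H) y‖
    _ = ‖∫ t, (L (k t) (H (x - t)) - L (k t) (H (y - t))) ∂μ‖ := by
      rw [integral_sub (hconv x) (hconv y)]; rfl
    _ ≤ ∫ t, ‖L‖ * κ * ‖x - y‖ * ‖k t‖ ∂μ :=
      norm_integral_le_of_norm_le (hint.norm.const_mul _) (Eventually.of_forall hpointwise)
    _ = ‖L‖ * (∫ t, ‖k t‖ ∂μ) * κ * ‖x - y‖ := by rw [integral_const_mul]; ring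

theorem norm_fderiv_convolution_le_of_lipschitzWith {F₁ F₂ : Type*} [NormedSpace ℝ E]
    [NormedAddCommGroup F₁] [NormedSpace ℝ F₁] [NormedAddCommGroup F₂]
    [NormedSpace ℝ F₂] [MeasurableSpace E] [BorelSpace E] {μ : Measure E}
    [IsFiniteMeasureOnCompacts μ] {k : E → F₁} {H : E → F₂} {κ : ℝ≥0}
    (L : F₁ →L[ℝ] F₂ →L[ℝ] F) (hk : Continuous k) (hkc : HasCompactSupport k)
    (hH : LipschitzWith κ H) (x : E) :
    ‖fderiv ℝ (k ⋆[L, μ] H) x‖ ≤ ‖L‖ * (∫ t, ‖k t‖ ∂μ) * κ :=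
  norm_fderiv_le_of_lip' ℝ (by positivity) (Eventually.of_forall fun y =>
    norm_convolution_sub_le_of_lipschitzWith L hk hkc hH y x)

variable [NormedSpace ℝ E] [FiniteDimensional ℝ E] [CompleteSpace F]

variable (E F) in
theorem exists_contDiff_near_of_lipschitzWith_unit_scale :
    ∃ C : ℝ, ∀ {κ : ℝ≥0} {H : E → F}, LipschitzWith κ H →
      ∃ h : E → F, ContDiff ℝ ∞ h ∧ (∀ x, ‖H x - h x‖ ≤ κ) ∧ (∀ x, ‖fderiv ℝ h x‖ ≤ κ) ∧
        ∀ x, ‖fderiv ℝ (fderiv ℝ h) x‖ ≤ C * κ := by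
  borelize E
  let μ : Measure E := Measure.addHaar
  let φ : ContDiffBump (0 : E) := ⟨1/2, 1, by norm_num, by norm_num⟩
  let η : E → ℝ := φ.normed μ
  let L : ℝ →L[ℝ] F →L[ℝ] F := lsmul ℝ ℝ
  have hη (n : ℕ∞) : ContDiff ℝ n η := φ.contDiff_normed
  have hηc : HasCompactSupport η := φ.hasCompactSupport_normed
  have hη_mass : ∫ t, ‖η t‖ ∂μ = 1 := by
    simpa only [η, Real.norm_of_nonneg (φ.nonneg_normed _)] using φ.integral_normed (μ := μ)
  refine ⟨∫ t, ‖fderiv ℝ η t‖ ∂μ, fun {κ H} hH => ?_⟩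
  have hloc : LocallyIntegrable H μ := hH.continuous.locallyIntegrable
  have hfderiv : fderiv ℝ (η ⋆[L, μ] H) = (fderiv ℝ η ⋆[L.precompL E, μ] H) :=
    funext fun x => (hηc.hasFDerivAt_convolution_left L (hη 1) hloc x).fderiv
  refine ⟨η ⋆[L, μ] H, hηc.contDiff_convolution_left L (hη ⊤) hloc, fun x => ?_, fun x => ?_,
    fun x => ?_⟩
  · rw [← dist_eq_norm, dist_comm]
    refine φ.dist_normed_convolution_le hH.continuous.aestronglyMeasurable fun y hy => ?_
    exact (hH.dist_le_mul y x).trans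
      (mul_le_of_le_one_right κ.coe_nonneg (Metric.mem_ball.1 hy).le)
  · refine (norm_fderiv_convolution_le_of_lipschitzWith L (hη 0).continuous hηc hH x).trans ?_
    rw [hη_mass, mul_one]
    exact mul_le_of_le_one_left κ.coe_nonneg opNorm_lsmul_le
  · rw [hfderiv]
    refine (norm_fderiv_convolution_le_of_lipschitzWith (L.precompL E)
      ((hη 1).continuous_fderiv one_ne_zero) (hηc.fderiv (𝕜 := ℝ)) hH x).trans ?_
    have hL := (L.norm_precompL_le E).trans opNorm_lsmul_le
    gcongr
    exact mul_le_of_le_one_left (integral_nonneg fun _ => norm_nonneg _) hL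

variable (E F) in
theorem exists_contDiff_near_of_lipschitzWith :
    ∃ C : ℝ, ∀ {κ : ℝ≥0} {H : E → F}, LipschitzWith κ H → ∀ {s : ℝ}, 0 < s →
      ∃ h : E → F, ContDiff ℝ ∞ h ∧ (∀ x, ‖H x - h x‖ ≤ κ * s) ∧ (∀ x, ‖fderiv ℝ h x‖ ≤ κ) ∧
        ∀ x, ‖fderiv ℝ (fderiv ℝ h) x‖ ≤ C * κ / s := by
  obtain ⟨C, hunit⟩ := exists_contDiff_near_of_lipschitzWith_unit_scale E F
  refine ⟨C, fun {κ H} hH {s} hs => ?_⟩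
  have hrescaled : LipschitzWith κ fun x => s⁻¹ • H (s • x) :=
    LipschitzWith.of_dist_le_mul fun x y =>
      calc dist (s⁻¹ • H (s • x)) (s⁻¹ • H (s • y))
        _ = s⁻¹ * dist (H (s • x)) (H (s • y)) := by
          rw [dist_smul₀, Real.norm_of_nonneg (inv_pos.2 hs).le]
        _ ≤ s⁻¹ * (κ * dist (s • x) (s • y)) := by gcongr; exact hH.dist_le_mul _ _
        _ = κ * dist x y := by
          rw [dist_smul₀, Real.norm_of_nonneg hs.le]; field_simp
  obtain ⟨h, h_smooth, h_near, h_fderiv, h_fderiv₂⟩ := hunit hrescaled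
  have hD : fderiv ℝ (fun x => s • h (s⁻¹ • x)) = fun x => fderiv ℝ h (s⁻¹ • x) := by
    ext1 x
    rw [← Pi.smul_def, fderiv_const_smul_field, Pi.smul_apply, fderiv_comp_smul, smul_smul,
      mul_inv_cancel₀ hs.ne', one_smul]
  refine ⟨fun x => s • h (s⁻¹ • x), ?_, fun x => ?_, fun x => ?_, fun x => ?_⟩
  · exact (h_smooth.comp (contDiff_const_smul s⁻¹)).const_smul s
  · calc ‖H x - s • h (s⁻¹ • x)‖
      _ = ‖s • (s⁻¹ • H (s • s⁻¹ • x) - h (s⁻¹ • x))‖ := by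
        rw [smul_sub, smul_inv_smul₀ hs.ne', smul_inv_smul₀ hs.ne']
      _ ≤ κ * s := by
        rw [norm_smul, Real.norm_of_nonneg hs.le, mul_comm]
        gcongr
        exact h_near _
  · rw [hD]
    exact h_fderiv _
  · rw [hD, fderiv_comp_smul, div_eq_inv_mul]
    refine (opNorm_smul_le _ _).trans ?_
    rw [Real.norm_of_nonneg (inv_pos.2 hs).le]
    gcongr
    exact h_fderiv₂ _

end Mollification

section SecondDerivative

variable {𝕜 E F : Type*} [NontriviallyNormedField 𝕜] [NormedAddCommGroup E] [NormedSpace 𝕜 E]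
  [NormedAddCommGroup F] [NormedSpace 𝕜 F] {x : E}

theorem eventually_differentiableAt_of_contDiffAt_two {f : E → F} (hf : ContDiffAt 𝕜 2 f x) :
    ∀ᶠ y in 𝓝 x, DifferentiableAt 𝕜 f y :=
  (hf.eventually (by simp)).mono fun _ hy => hy.differentiableAt two_ne_zero

theorem differentiableAt_fderiv_of_contDiffAt_two {f : E → F} (hf : ContDiffAt 𝕜 2 f x) :
    DifferentiableAt 𝕜 (fderiv 𝕜 f) x :=
  (hf.fderiv_right (m := 1) (by norm_num)).differentiableAt one_ne_zero

theorem fderiv_fderiv_add {f g : E → F} (hf : ContDiffAt 𝕜 2 f x) (hg : ContDiffAt 𝕜 2 g x) :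
    fderiv 𝕜 (fderiv 𝕜 (f + g)) x = fderiv 𝕜 (fderiv 𝕜 f) x + fderiv 𝕜 (fderiv 𝕜 g) x := by
  have hD : fderiv 𝕜 (f + g) =ᶠ[𝓝 x] fderiv 𝕜 f + fderiv 𝕜 g := by
    filter_upwards [eventually_differentiableAt_of_contDiffAt_two hf,
      eventually_differentiableAt_of_contDiffAt_two hg] with y hfy hgy
    exact fderiv_add hfy hgy
  rw [hD.fderiv_eq, fderiv_add (differentiableAt_fderiv_of_contDiffAt_two hf)
    (differentiableAt_fderiv_of_contDiffAt_two hg)]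

theorem fderiv_fderiv_mul_apply {f g : E → 𝕜} (hf : ContDiffAt 𝕜 2 f x)
    (hg : ContDiffAt 𝕜 2 g x) (v w : E) :
    fderiv 𝕜 (fderiv 𝕜 (f * g)) x v w =
      f x * fderiv 𝕜 (fderiv 𝕜 g) x v w + fderiv 𝕜 f x v * fderiv 𝕜 g x w +
        (g x * fderiv 𝕜 (fderiv 𝕜 f) x v w + fderiv 𝕜 g x v * fderiv 𝕜 f x w) := by
  have hD : fderiv 𝕜 (f * g) =ᶠ[𝓝 x] fun y => f y • fderiv 𝕜 g y + g y • fderiv 𝕜 f y := by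
    filter_upwards [eventually_differentiableAt_of_contDiffAt_two hf,
      eventually_differentiableAt_of_contDiffAt_two hg] with y hfy hgy
    exact fderiv_mul hfy hgy
  have hfx := (hf.differentiableAt two_ne_zero).hasFDerivAt
  have hgx := (hg.differentiableAt two_ne_zero).hasFDerivAt
  have hD₂ := (hfx.smul (differentiableAt_fderiv_of_contDiffAt_two hg).hasFDerivAt).add
    (hgx.smul (differentiableAt_fderiv_of_contDiffAt_two hf).hasFDerivAt)
  rw [(hD₂.congr_of_eventuallyEq hD).fderiv]
  rfl

end SecondDerivative

section RealHessian

variable {E : Type*} [NormedAddCommGroup E] [NormedSpace ℝ E] {x : E}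

theorem abs_fderiv_fderiv_apply_le (f : E → ℝ) (x v : E) :
    |fderiv ℝ (fderiv ℝ f) x v v| ≤ ‖fderiv ℝ (fderiv ℝ f) x‖ * ‖v‖ ^ 2 :=
  ((fderiv ℝ (fderiv ℝ f) x).le_opNorm₂ v v).trans_eq (by ring)

theorem fderiv_fderiv_mul_self_ge {θ g : E → ℝ} (hθ : ContDiffAt ℝ 2 θ x)
    (hg : ContDiffAt ℝ 2 g x) (v : E) :
    θ x * fderiv ℝ (fderiv ℝ g) x v v -
        (2 * (‖fderiv ℝ θ x‖ * ‖fderiv ℝ g x‖) + |g x| * ‖fderiv ℝ (fderiv ℝ θ) x‖) * ‖v‖ ^ 2 ≤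
      fderiv ℝ (fderiv ℝ (θ * g)) x v v := by
  have hcross : |fderiv ℝ θ x v * fderiv ℝ g x v| ≤
      ‖fderiv ℝ θ x‖ * ‖fderiv ℝ g x‖ * ‖v‖ ^ 2 :=
    calc |fderiv ℝ θ x v * fderiv ℝ g x v|
      _ = ‖fderiv ℝ θ x v‖ * ‖fderiv ℝ g x v‖ := abs_mul _ _
      _ ≤ ‖fderiv ℝ θ x‖ * ‖v‖ * (‖fderiv ℝ g x‖ * ‖v‖) := by
        gcongr <;> exact ContinuousLinearMap.le_opNorm _ _
      _ = ‖fderiv ℝ θ x‖ * ‖fderiv ℝ g x‖ * ‖v‖ ^ 2 := by ring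
  have hlast : |g x * fderiv ℝ (fderiv ℝ θ) x v v| ≤
      |g x| * (‖fderiv ℝ (fderiv ℝ θ) x‖ * ‖v‖ ^ 2) := by
    rw [abs_mul]
    gcongr
    exact abs_fderiv_fderiv_apply_le θ x v
  rw [fderiv_fderiv_mul_apply hθ hg]
  linarith [neg_le_of_abs_le hcross, neg_le_of_abs_le hlast]

variable {h : E → ℝ} (l : E →L[ℝ] ℝ)

theorem fderiv_clm_sub (hh : DifferentiableAt ℝ h x) :
    fderiv ℝ (fun y => l y - h y) x = l - fderiv ℝ h x := by
  rw [fderiv_fun_sub l.differentiableAt hh, l.fderiv]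

theorem sq_sub_le_fderiv_fderiv_sq_sub (hh : ContDiffAt ℝ 2 h x) (v : E) :
    l v ^ 2 - 2 * (‖fderiv ℝ h x‖ ^ 2 + |l x - h x| * ‖fderiv ℝ (fderiv ℝ h) x‖) * ‖v‖ ^ 2 ≤
      fderiv ℝ (fderiv ℝ fun y => (l y - h y) ^ 2) x v v := by
  have hf : ContDiffAt ℝ 2 (fun y => l y - h y) x := l.contDiff.contDiffAt.sub hh
  have hD₂ : fderiv ℝ (fderiv ℝ fun y => l y - h y) x = -fderiv ℝ (fderiv ℝ h) x := by
    rw [EventuallyEq.fderiv_eq ((eventually_differentiableAt_of_contDiffAt_two hh).mono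
      fun y hy => fderiv_clm_sub l hy), fderiv_const_sub]
  have hexpand : fderiv ℝ (fderiv ℝ fun y => (l y - h y) ^ 2) x v v =
      2 * (l v - fderiv ℝ h x v) ^ 2 - 2 * ((l x - h x) * fderiv ℝ (fderiv ℝ h) x v v) := by
    have hsq : (fun y => (l y - h y) ^ 2) = (fun y => l y - h y) * fun y => l y - h y :=
      funext fun y => sq _
    rw [hsq, fderiv_fderiv_mul_apply hf hf, fderiv_clm_sub l (hh.differentiableAt two_ne_zero), hD₂]
    simp only [neg_apply, sub_apply]
    ring
  have hfirst : fderiv ℝ h x v ^ 2 ≤ ‖fderiv ℝ h x‖ ^ 2 * ‖v‖ ^ 2 := by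
    rw [← sq_abs, ← mul_pow]
    exact pow_le_pow_left₀ (abs_nonneg _) ((fderiv ℝ h x).le_opNorm v) 2
  have hsecond : (l x - h x) * fderiv ℝ (fderiv ℝ h) x v v ≤
      |l x - h x| * (‖fderiv ℝ (fderiv ℝ h) x‖ * ‖v‖ ^ 2) := by
    refine (le_abs_self _).trans ?_
    rw [abs_mul]
    gcongr
    exact abs_fderiv_fderiv_apply_le h x v
  rw [hexpand]
  linarith [sq_nonneg (l v - 2 * fderiv ℝ h x v)]

theorem cutoff_mul_sq_sub_le_fderiv_fderiv {θ : E → ℝ} (hθ : ContDiffAt ℝ 2 θ x)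
    (hh : ContDiffAt ℝ 2 h x) {κ C s T : ℝ} (hκ : 0 ≤ κ) (hs : 0 < s) (hs_one : s ≤ 1)
    (hθ_nonneg : 0 ≤ θ x) (hDθ : ‖fderiv ℝ θ x‖ ≤ T) (hD₂θ : ‖fderiv ℝ (fderiv ℝ θ) x‖ ≤ T)
    (h_near : |l x - h x| ≤ κ * s) (hDh : ‖fderiv ℝ h x‖ ≤ κ)
    (hD₂h : ‖fderiv ℝ (fderiv ℝ h) x‖ ≤ C * κ / s) (v : E) :
    θ x * (l v ^ 2 - 2 * (1 + C) * κ ^ 2 * ‖v‖ ^ 2) -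
        (4 * T * κ * (‖l‖ + κ) + κ ^ 2 * T) * s * ‖v‖ ^ 2 ≤
      fderiv ℝ (fderiv ℝ (θ * fun y => (l y - h y) ^ 2)) x v v := by
  have hf : ContDiffAt ℝ 2 (fun y => l y - h y) x := l.contDiff.contDiffAt.sub hh
  have hT : 0 ≤ T := (norm_nonneg _).trans hDθ
  have hmain : l v ^ 2 - 2 * (1 + C) * κ ^ 2 * ‖v‖ ^ 2 ≤
      fderiv ℝ (fderiv ℝ fun y => (l y - h y) ^ 2) x v v := by
    refine le_trans ?_ (sq_sub_le_fderiv_fderiv_sq_sub l hh v)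
    have hprod : |l x - h x| * ‖fderiv ℝ (fderiv ℝ h) x‖ ≤ κ * s * (C * κ / s) := by gcongr
    have hsq : ‖fderiv ℝ h x‖ ^ 2 ≤ κ ^ 2 := by gcongr
    have : κ ^ 2 + κ * s * (C * κ / s) = (1 + C) * κ ^ 2 := by field_simp
    have : (‖fderiv ℝ h x‖ ^ 2 + |l x - h x| * ‖fderiv ℝ (fderiv ℝ h) x‖) * ‖v‖ ^ 2 ≤
        (1 + C) * κ ^ 2 * ‖v‖ ^ 2 := by gcongr; linarith
    linarith
  have hDsq : ‖fderiv ℝ (fun y => (l y - h y) ^ 2) x‖ ≤ 2 * (κ * s) * (‖l‖ + κ) := by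
    rw [fderiv_fun_pow 2 (hf.differentiableAt two_ne_zero),
      fderiv_clm_sub l (hh.differentiableAt two_ne_zero), norm_smul]
    have : ‖2 • (l x - h x) ^ (2 - 1)‖ = 2 * |l x - h x| := by simp
    rw [this]
    gcongr
    exact (norm_sub_le _ _).trans (by gcongr)
  have hsq : |(l x - h x) ^ 2| ≤ κ ^ 2 * s := by
    rw [abs_pow]
    calc |l x - h x| ^ 2 ≤ (κ * s) ^ 2 := by gcongr
      _ = κ ^ 2 * (s * s) := by ring
      _ ≤ κ ^ 2 * (s * 1) := by gcongr
      _ = κ ^ 2 * s := by ring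
  calc θ x * (l v ^ 2 - 2 * (1 + C) * κ ^ 2 * ‖v‖ ^ 2) -
        (4 * T * κ * (‖l‖ + κ) + κ ^ 2 * T) * s * ‖v‖ ^ 2
    _ = θ x * (l v ^ 2 - 2 * (1 + C) * κ ^ 2 * ‖v‖ ^ 2) -
        (2 * (T * (2 * (κ * s) * (‖l‖ + κ))) + κ ^ 2 * s * T) * ‖v‖ ^ 2 := by ring
    _ ≤ _ := by gcongr
    _ ≤ _ := fderiv_fderiv_mul_self_ge hθ (hf.pow 2) v

end RealHessian

section Cutoff

variable {E : Type*} [NormedAddCommGroup E] [NormedSpace ℝ E]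

theorem exists_norm_fderiv_le_of_hasCompactSupport {F : Type*} [NormedAddCommGroup F]
    [NormedSpace ℝ F] {f : E → F} (hf : ContDiff ℝ 1 f) (hfc : HasCompactSupport f) :
    ∃ T, ∀ x, ‖fderiv ℝ f x‖ ≤ T :=
  (hfc.fderiv (𝕜 := ℝ)).exists_bound_of_continuous (hf.continuous_fderiv one_ne_zero)

variable [FiniteDimensional ℝ E]

variable (E) in
theorem exists_cutoff_sq_of_lipschitzOnWith {a : ℝ} (ha : 0 < a) :
    ∃ κ : ℝ≥0, 0 < κ ∧ ∀ {l : E →L[ℝ] ℝ} {M : Set E}, LipschitzOnWith κ l M →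
      ∀ {θ : E → ℝ}, ContDiff ℝ 2 θ → HasCompactSupport θ → 0 ≤ θ → ∀ {ε : ℝ}, 0 < ε →
        ∃ q : E → ℝ, ContDiff ℝ 2 q ∧ tsupport q ⊆ tsupport θ ∧ ∀ x ∈ M, ∀ v,
          θ x * (l v ^ 2 - a * ‖v‖ ^ 2) - ε * ‖v‖ ^ 2 ≤ fderiv ℝ (fderiv ℝ q) x v v := by
  obtain ⟨C, hmollify⟩ := exists_contDiff_near_of_lipschitzWith E ℝ
  obtain ⟨b, hb, hba⟩ := exists_pos_mul_lt ha (2 * (1 + C))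
  obtain ⟨κ, hκ, rfl⟩ : ∃ κ : ℝ≥0, 0 < κ ∧ (κ : ℝ) ^ 2 = b :=
    ⟨⟨√b, Real.sqrt_nonneg b⟩, Real.sqrt_pos.2 hb, Real.sq_sqrt hb.le⟩
  refine ⟨κ, hκ, fun {l M} hl {θ} hθ hθc hθ_nonneg {ε} hε => ?_⟩
  obtain ⟨H, hH, hlH⟩ := hl.extend_real
  obtain ⟨T₁, hDθ⟩ := exists_norm_fderiv_le_of_hasCompactSupport (hθ.of_le one_le_two) hθc
  obtain ⟨T₂, hD₂θ⟩ := exists_norm_fderiv_le_of_hasCompactSupport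
    (hθ.fderiv_right (m := 1) (by norm_num)) (hθc.fderiv (𝕜 := ℝ))
  let T := max T₁ T₂
  obtain ⟨c, hc, hcε⟩ := exists_pos_mul_lt hε (4 * T * κ * (‖l‖ + κ) + κ ^ 2 * T)
  have hT : 0 ≤ T := (norm_nonneg _).trans ((hDθ 0).trans (le_max_left T₁ T₂))
  obtain ⟨h, h_smooth, h_near, hDh, hD₂h⟩ := hmollify hH (s := min 1 c) (by positivity)
  replace h_smooth : ContDiff ℝ 2 h := contDiff_infty.1 h_smooth 2
  refine ⟨θ * fun y => (l y - h y) ^ 2, hθ.mul ((l.contDiff.sub h_smooth).pow 2),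
    tsupport_mul_subset_left, fun x hx v => ?_⟩
  refine le_trans ?_ (cutoff_mul_sq_sub_le_fderiv_fderiv l hθ.contDiffAt h_smooth.contDiffAt
    κ.coe_nonneg (by positivity) (min_le_left 1 c) (hθ_nonneg x)
    ((hDθ x).trans (le_max_left T₁ T₂)) ((hD₂θ x).trans (le_max_right T₁ T₂))
    (by rw [hlH hx]; exact h_near x) (hDh x) (hD₂h x) v)
  have hθx := hθ_nonneg x
  have herror : (4 * T * κ * (‖l‖ + κ) + κ ^ 2 * T) * min 1 c ≤ ε :=
    le_trans (by gcongr; exact min_le_right 1 c) hcε.le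
  gcongr

end Cutoff

open scoped Manifold in
theorem exists_contDiff_cutoff {E : Type*} [NormedAddCommGroup E] [NormedSpace ℝ E]
    [FiniteDimensional ℝ E] (n : ℕ∞) {K W : Set E} (hK : IsCompact K) (hW : IsOpen W)
    (hKW : K ⊆ W) :
    ∃ χ : E → ℝ, ContDiff ℝ n χ ∧ HasCompactSupport χ ∧ tsupport χ ⊆ W ∧
      (∀ x ∈ K, χ x = 1) ∧ 0 ≤ χ := by
  obtain ⟨L, hL, hKL, hLW⟩ := exists_compact_between hK hW hKW
  obtain ⟨χ, hχK, hχL, hχ⟩ :=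
    exists_contMDiffMap_one_nhds_of_subset_interior (n := n) 𝓘(ℝ, E) hK.isClosed hKL
  have hsupport : tsupport χ ⊆ L :=
    closure_minimal (Function.support_subset_iff'.2 hχL) hL.isClosed
  exact ⟨χ, χ.contMDiff.contDiff, HasCompactSupport.intro hL hχL, hsupport.trans hLW,
    fun x hx => hχK.self_of_nhdsSet x hx, fun x => (hχ x).1⟩

section Homogeneous

variable {E : Type*} [NormedAddCommGroup E] [NormedSpace ℝ E]

theorem norm_sq_mul_apply_inv_norm_smul {Q : E → ℝ} (hQ : ∀ (t : ℝ) v, Q (t • v) = t ^ 2 * Q v)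
    {v : E} (hv : v ≠ 0) : ‖v‖ ^ 2 * Q (‖v‖⁻¹ • v) = Q v := by
  have := norm_ne_zero_iff.2 hv
  rw [hQ]
  field_simp

theorem inv_norm_smul_mem_sphere {v : E} (hv : v ≠ 0) : ‖v‖⁻¹ • v ∈ Metric.sphere (0 : E) 1 := by
  rw [mem_sphere_zero_iff_norm, norm_smul, norm_inv, norm_norm,
    inv_mul_cancel₀ (norm_ne_zero_iff.2 hv)]

theorem exists_pos_forall_mul_norm_sq_le [FiniteDimensional ℝ E] {X : Type*} [TopologicalSpace X]
    {K : Set X} (hK : IsCompact K) {Q : X → E → ℝ}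
    (hQ_cont : ContinuousOn (fun z : X × E => Q z.1 z.2) (K ×ˢ univ))
    (hQ : ∀ x (t : ℝ) v, Q x (t • v) = t ^ 2 * Q x v)
    (hQ_pos : ∀ x ∈ K, ∀ v, v ≠ 0 → 0 < Q x v) :
    ∃ b > 0, ∀ x ∈ K, ∀ v, b * ‖v‖ ^ 2 ≤ Q x v := by
  obtain ⟨b, hb, hbQ⟩ := (hK.prod (isCompact_sphere (0 : E) 1)).exists_forall_le'
    (hQ_cont.mono (prod_mono_right (subset_univ _)))
    fun z hz => hQ_pos z.1 hz.1 z.2 (Metric.ne_of_mem_sphere hz.2 one_ne_zero)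
  refine ⟨b, hb, fun x hx v => ?_⟩
  rcases eq_or_ne v 0 with rfl | hv
  · have : Q x 0 = 0 := by simpa using hQ x 0 0
    simp [this]
  · rw [← norm_sq_mul_apply_inv_norm_smul (hQ x) hv, mul_comm]
    gcongr
    exact hbQ (x, _) ⟨hx, inv_norm_smul_mem_sphere hv⟩

end Homogeneous

section LeviForm

variable {E : Type*} [NormedAddCommGroup E] [NormedSpace ℂ E] {x : E}

/-- Strong plurisubharmonicity of `ρ` at the point `x`: positivity of the Levi form there. -/
def StronglyPshAt (ρ : E → ℝ) (x : E) : Prop :=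
  ∀ v, v ≠ 0 → 0 < leviForm ρ x v

theorem leviForm_congr {f g : E → ℝ} (h : f =ᶠ[𝓝 x] g) (v : E) :
    leviForm f x v = leviForm g x v := by
  simp only [leviForm, (h.fderiv (𝕜 := ℝ)).fderiv_eq]

theorem leviForm_zero (x v : E) : leviForm (0 : E → ℝ) x v = 0 := by
  simp [leviForm, fderiv_zero]

theorem leviForm_eq_zero_of_notMem_tsupport {f : E → ℝ} (hx : x ∉ tsupport f) (v : E) :
    leviForm f x v = 0 :=
  (leviForm_congr (notMem_tsupport_iff_eventuallyEq.1 hx) v).trans (leviForm_zero x v)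

theorem leviForm_add {f g : E → ℝ} (hf : ContDiffAt ℝ 2 f x) (hg : ContDiffAt ℝ 2 g x) (v : E) :
    leviForm (f + g) x v = leviForm f x v + leviForm g x v := by
  simp only [leviForm, fderiv_fderiv_add hf hg, add_apply]
  ring

theorem leviForm_sum {ι : Type*} {s : Finset ι} {f : ι → E → ℝ}
    (hf : ∀ i ∈ s, ContDiffAt ℝ 2 (f i) x) (v : E) :
    leviForm (∑ i ∈ s, f i) x v = ∑ i ∈ s, leviForm (f i) x v := by
  induction s using Finset.cons_induction with
  | empty => simpa using leviForm_zero x v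
  | cons i s hi ih =>
    simp only [Finset.forall_mem_cons] at hf
    have hsum : ContDiffAt ℝ 2 (∑ i ∈ s, f i) x := by
      rw [Finset.sum_fn]
      exact ContDiffAt.sum hf.2
    rw [Finset.sum_cons, Finset.sum_cons, leviForm_add hf.1 hsum, ih hf.2]

theorem leviForm_smul (ρ : E → ℝ) (x : E) (t : ℝ) (v : E) :
    leviForm ρ x (t • v) = t ^ 2 * leviForm ρ x v := by
  simp only [leviForm, smul_comm Complex.I t v, map_smul, smul_apply, smul_eq_mul]
  ring

theorem abs_leviForm_le (ρ : E → ℝ) (x v : E) :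
    |leviForm ρ x v| ≤ ‖fderiv ℝ (fderiv ℝ ρ) x‖ * ‖v‖ ^ 2 := by
  have hv := abs_le.1 (abs_fderiv_fderiv_apply_le ρ x v)
  have hIv := abs_le.1 (abs_fderiv_fderiv_apply_le ρ x (Complex.I • v))
  rw [norm_smul, Complex.norm_I, one_mul] at hIv
  have : 0 ≤ ‖fderiv ℝ (fderiv ℝ ρ) x‖ * ‖v‖ ^ 2 := by positivity
  rw [leviForm, abs_le]
  constructor <;> linarith

variable {V K : Set E} {ρ : E → ℝ}

theorem continuousOn_fderiv_fderiv (hV : IsOpen V) (hρ : ContDiffOn ℝ 2 ρ V) :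
    ContinuousOn (fderiv ℝ (fderiv ℝ ρ)) V :=
  (hρ.fderiv_of_isOpen (m := 1) hV (by norm_num)).continuousOn_fderiv_of_isOpen hV le_rfl

theorem continuousOn_leviForm (hV : IsOpen V) (hρ : ContDiffOn ℝ 2 ρ V) :
    ContinuousOn (fun z : E × E => leviForm ρ z.1 z.2) (V ×ˢ univ) := by
  have hD₂ : ContinuousOn (fun z : E × E => fderiv ℝ (fderiv ℝ ρ) z.1) (V ×ˢ univ) :=
    (continuousOn_fderiv_fderiv hV hρ).comp continuousOn_fst fun z hz => hz.1
  have hI : ContinuousOn (fun z : E × E => Complex.I • z.2) (V ×ˢ univ) := by fun_prop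
  exact continuousOn_const.mul (((hD₂.clm_apply continuousOn_snd).clm_apply continuousOn_snd).add
    ((hD₂.clm_apply hI).clm_apply hI))

theorem exists_forall_abs_leviForm_le (hV : IsOpen V) (hρ : ContDiffOn ℝ 2 ρ V)
    (hK : IsCompact K) (hKV : K ⊆ V) :
    ∃ b : ℝ, 0 ≤ b ∧ ∀ x ∈ K, ∀ v, |leviForm ρ x v| ≤ b * ‖v‖ ^ 2 := by
  obtain ⟨b, hb⟩ := hK.exists_bound_of_continuousOn (E := E →L[ℝ] E →L[ℝ] ℝ)
    ((continuousOn_fderiv_fderiv hV hρ).mono hKV)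
  refine ⟨max 0 b, le_max_left 0 b, fun x hx v => (abs_leviForm_le ρ x v).trans ?_⟩
  gcongr
  exact (hb x hx).trans (le_max_right 0 b)

variable [FiniteDimensional ℂ E]

theorem exists_pos_forall_le_leviForm (hV : IsOpen V) (hρ : ContDiffOn ℝ 2 ρ V)
    (hK : IsCompact K) (hKV : K ⊆ V) (hpsh : ∀ x ∈ K, StronglyPshAt ρ x) :
    ∃ b > 0, ∀ x ∈ K, ∀ v, b * ‖v‖ ^ 2 ≤ leviForm ρ x v :=
  have : FiniteDimensional ℝ E := FiniteDimensional.complexToReal E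
  exists_pos_forall_mul_norm_sq_le hK
    ((continuousOn_leviForm hV hρ).mono (prod_mono_left hKV)) (leviForm_smul ρ) hpsh

theorem isOpen_setOf_stronglyPshAt (hV : IsOpen V) (hρ : ContDiffOn ℝ 2 ρ V) :
    IsOpen {x ∈ V | StronglyPshAt ρ x} := by
  have : ProperSpace E := FiniteDimensional.proper ℂ E
  refine isOpen_iff_mem_nhds.2 fun x ⟨hxV, hx⟩ => ?_
  have hsphere : ∀ᶠ y in 𝓝 x, ∀ v ∈ Metric.sphere (0 : E) 1, 0 < leviForm ρ y v := by
    refine (isCompact_sphere 0 1).eventually_forall_of_forall_eventually fun v hv => ?_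
    have hcont := (continuousOn_leviForm hV hρ).continuousAt
      ((hV.prod isOpen_univ).mem_nhds (x := (x, v)) ⟨hxV, trivial⟩)
    exact hcont.eventually (lt_mem_nhds (hx v (Metric.ne_of_mem_sphere hv one_ne_zero)))
  filter_upwards [hsphere, hV.mem_nhds hxV] with y hy hyV
  refine ⟨hyV, fun v hv => ?_⟩
  rw [← norm_sq_mul_apply_inv_norm_smul (leviForm_smul ρ y) hv]
  exact mul_pos (pow_pos (norm_pos_iff.2 hv) 2) (hy _ (inv_norm_smul_mem_sphere hv))

end LeviForm

section TotallyReal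

/-- A real subspace `T` of a complex vector space is totally real if `T ∩ iT = {0}`. -/
def IsTotallyReal {E : Type*} [AddCommGroup E] [Module ℂ E] (T : Submodule ℝ E) : Prop :=
  ∀ v ∈ T, Complex.I • v ∈ T → v = 0

variable {E : Type*} [NormedAddCommGroup E] [NormedSpace ℂ E] [FiniteDimensional ℂ E]

theorem IsTotallyReal.exists_functionals {T : Submodule ℝ E} (hT : IsTotallyReal T) :
    ∃ (k : ℕ) (l : Fin k → E →L[ℝ] ℝ), (∀ j, ∀ v ∈ T, l j v = 0) ∧
      ∃ c > 0, ∀ v, c * ‖v‖ ^ 2 ≤ ∑ j, (l j v ^ 2 + l j (Complex.I • v) ^ 2) := by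
  have : FiniteDimensional ℝ E := FiniteDimensional.complexToReal E
  let b := Module.finBasis ℝ (E ⧸ T)
  let l (j : Fin (Module.finrank ℝ (E ⧸ T))) : E →L[ℝ] ℝ :=
    (b.coord j ∘ₗ T.mkQ).toContinuousLinearMap
  have hl (v : E) : (∀ j, l j v = 0) ↔ v ∈ T :=
    b.forall_coord_eq_zero_iff.trans (Submodule.Quotient.mk_eq_zero T)
  refine ⟨_, l, fun j v hv => (hl v).2 hv j, ?_⟩
  have hpos (v : E) (hv : v ≠ 0) : 0 < ∑ j, (l j v ^ 2 + l j (Complex.I • v) ^ 2) := by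
    refine (Finset.sum_nonneg fun j _ => by positivity).lt_of_ne' fun hzero => hv ?_
    have hterm (j) : l j v ^ 2 + l j (Complex.I • v) ^ 2 = 0 :=
      (Finset.sum_eq_zero_iff_of_nonneg fun j _ => by positivity).1 hzero j (Finset.mem_univ j)
    refine hT v ((hl v).1 fun j => ?_) ((hl _).1 fun j => ?_)
    · nlinarith [hterm j]
    · nlinarith [hterm j]
  obtain ⟨c, hc, hlower⟩ := exists_pos_forall_mul_norm_sq_le (isCompact_univ (X := Unit))
    (Q := fun _ v => ∑ j, (l j v ^ 2 + l j (Complex.I • v) ^ 2)) (by fun_prop)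
    (fun _ t v => by
      simp only [smul_comm Complex.I t v, map_smul, smul_eq_mul, mul_pow, Finset.mul_sum, mul_add])
    fun _ _ => hpos
  exact ⟨c, hc, hlower () trivial⟩

end TotallyReal

section StrictlyTangent

variable {E : Type*} [NormedAddCommGroup E] [NormedSpace ℝ E]

/-- The secants of `M` between points near `p` are asymptotically contained in the subspace `T`.
This is what the local theory needs of a `C¹` submanifold `M` with `T = T_p M`; it is phrased
with the functionals vanishing on `T`, which avoids choosing a complement of `T`. -/
def IsStrictlyTangentAt (M : Set E) (T : Submodule ℝ E) (p : E) : Prop :=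
  ∀ l : E →L[ℝ] ℝ, (∀ v ∈ T, l v = 0) →
    (fun z : E × E => l (z.1 - z.2)) =o[𝓝[M ×ˢ M] (p, p)] fun z => z.1 - z.2

theorem IsStrictlyTangentAt.exists_lipschitzOnWith {M : Set E} {T : Submodule ℝ E} {p : E}
    (hM : IsStrictlyTangentAt M T p) {l : E →L[ℝ] ℝ} (hl : ∀ v ∈ T, l v = 0) {κ : ℝ≥0}
    (hκ : 0 < κ) : ∃ N ∈ 𝓝 p, LipschitzOnWith κ l (M ∩ N) := by
  have hsecant := (hM l hl).def hκ
  rw [nhdsWithin_prod_eq] at hsecant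
  obtain ⟨A, hA, hAl⟩ := mem_prod_self_iff.1 hsecant
  obtain ⟨N, hN, hNA⟩ := mem_nhdsWithin_iff_exists_mem_nhds_inter.1 hA
  refine ⟨N, hN, LipschitzOnWith.of_dist_le_mul fun x hx y hy => ?_⟩
  rw [dist_eq_norm, dist_eq_norm, ← map_sub]
  exact hAl (mk_mem_prod (hNA hx.symm) (hNA hy.symm))

theorem isStrictlyTangentAt_range_of_hasStrictFDerivAt {G : Type*} [NormedAddCommGroup G]
    [NormedSpace ℝ G] [FiniteDimensional ℝ G] {g : G → E} {g' : E → G} {L : G →L[ℝ] E} {t : G}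
    {M : Set E} (hg : HasStrictFDerivAt g L t) (hL : Function.Injective L)
    (hg' : Tendsto g' (𝓝[M] g t) (𝓝 t)) (hinv : ∀ᶠ x in 𝓝[M] g t, g (g' x) = x) :
    IsStrictlyTangentAt M (LinearMap.range (L : G →ₗ[ℝ] E)) (g t) := by
  intro l hl
  obtain ⟨c, -, hanti⟩ :=
    LinearMap.exists_antilipschitzWith (L : G →ₗ[ℝ] E) (LinearMap.ker_eq_bot.2 hL)
  have hG : (fun z : G × G => l (g z.1 - g z.2)) =o[𝓝 (t, t)] fun z => g z.1 - g z.2 := by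
    have hlin : (fun z : G × G => z.1 - z.2) =O[𝓝 (t, t)] fun z => L (z.1 - z.2) :=
      Asymptotics.IsBigO.of_bound c <| .of_forall fun z => by
        simpa using hanti.le_mul_dist (z.1 - z.2) 0
    have hsecant := hlin.trans (hg.isLittleO.trans_isBigO hlin).right_isBigO_add
    simp only [sub_add_cancel] at hsecant
    refine (((l.isBigO_comp _ _).trans_isLittleO hg.isLittleO).trans_isBigO hsecant).congr_left
      fun z => ?_
    rw [map_sub l, show l (L (z.1 - z.2)) = 0 from hl _ ⟨z.1 - z.2, rfl⟩, sub_zero]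
  have hparam : Tendsto (Prod.map g' g') (𝓝[M ×ˢ M] (g t, g t)) (𝓝 (t, t)) := by
    rw [nhdsWithin_prod_eq, nhds_prod_eq]
    exact hg'.prodMap hg'
  have hinv₂ : ∀ᶠ z in 𝓝[M ×ˢ M] (g t, g t), g (g' z.1) = z.1 ∧ g (g' z.2) = z.2 := by
    rw [nhdsWithin_prod_eq]
    exact hinv.prod_mk hinv
  refine (hG.comp_tendsto hparam).congr' ?_ ?_ <;>
    filter_upwards [hinv₂] with z ⟨h₁, h₂⟩ <;> simp [h₁, h₂]

end StrictlyTangent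

section LocalConstruction

variable {E : Type*} [NormedAddCommGroup E] [NormedSpace ℂ E]

theorem le_leviForm_sum {ι : Type*} [Fintype ι] {q : ι → E → ℝ} {x : E}
    (hq : ∀ j, ContDiffAt ℝ 2 (q j) x) {l : ι → E →L[ℝ] ℝ} {c t a δ : ℝ} (ht : 0 ≤ t)
    (hl : ∀ v, c * ‖v‖ ^ 2 ≤ ∑ j, (l j v ^ 2 + l j (Complex.I • v) ^ 2))
    (hq_ge : ∀ j v, t * (l j v ^ 2 - a * ‖v‖ ^ 2) - δ * ‖v‖ ^ 2 ≤
      fderiv ℝ (fderiv ℝ (q j)) x v v) (v : E) :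
    (t / 4 * (c - 2 * Fintype.card ι * a) - Fintype.card ι / 2 * δ) * ‖v‖ ^ 2 ≤
      leviForm (∑ j, q j) x v := by
  have hterm (j : ι) : t / 4 * (l j v ^ 2 + l j (Complex.I • v) ^ 2)
      - (t * a / 2 + δ / 2) * ‖v‖ ^ 2 ≤ leviForm (q j) x v := by
    have hv := hq_ge j v
    have hIv := hq_ge j (Complex.I • v)
    rw [norm_smul, Complex.norm_I, one_mul] at hIv
    rw [leviForm]
    linarith
  rw [leviForm_sum fun j _ => hq j]
  calc (t / 4 * (c - 2 * Fintype.card ι * a) - Fintype.card ι / 2 * δ) * ‖v‖ ^ 2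
      = t / 4 * (c * ‖v‖ ^ 2) - Fintype.card ι * ((t * a / 2 + δ / 2) * ‖v‖ ^ 2) := by ring
    _ ≤ t / 4 * ∑ j, (l j v ^ 2 + l j (Complex.I • v) ^ 2)
          - Fintype.card ι * ((t * a / 2 + δ / 2) * ‖v‖ ^ 2) := by
        gcongr
        exact hl v
    _ = ∑ j, (t / 4 * (l j v ^ 2 + l j (Complex.I • v) ^ 2)
          - (t * a / 2 + δ / 2) * ‖v‖ ^ 2) := by
        rw [Finset.sum_sub_distrib, ← Finset.mul_sum, Finset.sum_const, Finset.card_univ,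
          nsmul_eq_mul]
    _ ≤ ∑ j, leviForm (q j) x v := Finset.sum_le_sum fun j _ => hterm j

/-- `N` carries `C²` bump functions whose Levi form is as large as desired on a compact part of
`M`, at the price of an arbitrarily small negative part along the rest of `M`. -/
def HasLeviBumps (M N : Set E) : Prop :=
  ∀ ⦃K W : Set E⦄, IsCompact K → IsOpen W → K ⊆ W → W ⊆ N → ∀ ⦃R ε : ℝ⦄, 0 ≤ R → 0 < ε →
    ∃ ψ : E → ℝ, ContDiff ℝ 2 ψ ∧ tsupport ψ ⊆ W ∧
      (∀ x ∈ M, ∀ v, -ε * ‖v‖ ^ 2 ≤ leviForm ψ x v) ∧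
      ∀ x ∈ M ∩ K, ∀ v, R * ‖v‖ ^ 2 ≤ leviForm ψ x v

theorem HasLeviBumps.of_sdiff {A B N : Set E} (h : HasLeviBumps (B \ A) N) :
    HasLeviBumps B (N \ A) := by
  intro K W hK hW hKW hWN R ε hR hε
  obtain ⟨ψ, hψ, hψW, hψ_ge, hψK⟩ := h hK hW hKW (hWN.trans sdiff_subset) hR hε
  refine ⟨ψ, hψ, hψW, fun x hx v => ?_, fun x hx => hψK x ⟨⟨hx.1, (hWN (hKW hx.2)).2⟩, hx.2⟩⟩
  by_cases hxψ : x ∈ tsupport ψ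
  · exact hψ_ge x ⟨hx, (hWN (hψW hxψ)).2⟩ v
  · rw [leviForm_eq_zero_of_notMem_tsupport hxψ]
    exact mul_nonpos_of_nonpos_of_nonneg (neg_nonpos.2 hε.le) (sq_nonneg _)

variable [FiniteDimensional ℂ E]

theorem exists_contDiff_leviForm_ge_of_lipschitzOnWith {k : ℕ} (l : Fin k → E →L[ℝ] ℝ) {c : ℝ}
    (hc : 0 < c) (hl : ∀ v, c * ‖v‖ ^ 2 ≤ ∑ j, (l j v ^ 2 + l j (Complex.I • v) ^ 2)) :
    ∃ κ : ℝ≥0, 0 < κ ∧ ∀ {M : Set E}, (∀ j, LipschitzOnWith κ (l j) M) → ∀ {θ : E → ℝ},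
      ContDiff ℝ 2 θ → HasCompactSupport θ → 0 ≤ θ → ∀ {ε : ℝ}, 0 < ε →
      ∃ ψ : E → ℝ, ContDiff ℝ 2 ψ ∧ tsupport ψ ⊆ tsupport θ ∧
        ∀ x ∈ M, ∀ v, (θ x * (c / 8) - ε) * ‖v‖ ^ 2 ≤ leviForm ψ x v := by
  have : FiniteDimensional ℝ E := FiniteDimensional.complexToReal E
  obtain ⟨a, ha, hac⟩ := exists_pos_mul_lt (half_pos hc) (2 * k : ℝ)
  obtain ⟨κ, hκ, hcutoff⟩ := exists_cutoff_sq_of_lipschitzOnWith E ha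
  refine ⟨κ, hκ, fun {M} hM {θ} hθ hθ_supp hθ_nonneg {ε} hε => ?_⟩
  obtain ⟨δ, hδ, hδε⟩ := exists_pos_mul_lt hε (k / 2 : ℝ)
  choose q hq hq_supp hq_ge using fun j => hcutoff (hM j) hθ hθ_supp hθ_nonneg hδ
  refine ⟨∑ j, q j, ?_, ?_, fun x hx v => ?_⟩
  · rw [Finset.sum_fn]
    exact ContDiff.sum fun j _ => hq j
  · refine closure_minimal (Function.support_subset_iff'.2 fun x hx => ?_) (isClosed_tsupport θ)
    rw [Finset.sum_apply]
    exact Finset.sum_eq_zero fun j _ => image_eq_zero_of_notMem_tsupport fun h => hx (hq_supp j h)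
  have hθx : 0 ≤ θ x := hθ_nonneg x
  have hcoeff : θ x * (c / 8) ≤ θ x / 4 * (c - 2 * k * a) := by nlinarith
  calc (θ x * (c / 8) - ε) * ‖v‖ ^ 2
      ≤ (θ x / 4 * (c - 2 * k * a) - k / 2 * δ) * ‖v‖ ^ 2 :=
        mul_le_mul_of_nonneg_right (by linarith) (sq_nonneg _)
    _ ≤ leviForm (∑ j, q j) x v := by
        simpa using le_leviForm_sum (fun j => (hq j).contDiffAt) hθx hl
          (fun j => hq_ge j x hx) v

theorem IsTotallyReal.exists_hasLeviBumps {T : Submodule ℝ E} (hT : IsTotallyReal T)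
    {M : Set E} {p : E} (hM : IsStrictlyTangentAt M T p) :
    ∃ N ∈ 𝓝 p, HasLeviBumps M N := by
  have : FiniteDimensional ℝ E := FiniteDimensional.complexToReal E
  obtain ⟨k, l, hlT, c, hc, hl⟩ := hT.exists_functionals
  obtain ⟨κ, hκ, hlevi⟩ := exists_contDiff_leviForm_ge_of_lipschitzOnWith l hc hl
  choose N hN hlip using fun j => hM.exists_lipschitzOnWith (hlT j) hκ
  refine ⟨⋂ j, N j, iInter_mem.2 hN, fun K W hK hW hKW hWN R ε hR hε => ?_⟩
  obtain ⟨χ, hχ, hχ_supp, hχW, hχK, hχ_nonneg⟩ := exists_contDiff_cutoff 2 hK hW hKW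
  let θ : E → ℝ := fun x => 8 * (R + ε) / c * χ x
  have hθ_nonneg : 0 ≤ θ := fun x => mul_nonneg (by positivity) (hχ_nonneg x)
  obtain ⟨ψ, hψ, hψθ, hψ_ge⟩ := hlevi
    (fun j => (hlip j).mono (inter_subset_inter_right M (iInter_subset N j)))
    (contDiff_const.mul hχ) hχ_supp.mul_left hθ_nonneg hε
  have hψW : tsupport ψ ⊆ W := hψθ.trans (tsupport_mul_subset_right.trans hχW)
  refine ⟨ψ, hψ, hψW, fun x hx v => ?_, fun x hx v => ?_⟩
  · by_cases hxψ : x ∈ tsupport ψ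
    · refine le_trans ?_ (hψ_ge x ⟨hx, hWN (hψW hxψ)⟩ v)
      gcongr
      have := mul_nonneg (hθ_nonneg x) hc.le
      linarith
    · rw [leviForm_eq_zero_of_notMem_tsupport hxψ]
      exact mul_nonpos_of_nonpos_of_nonneg (neg_nonpos.2 hε.le) (sq_nonneg _)
  · convert hψ_ge x ⟨hx.1, hWN (hKW hx.2)⟩ v using 2
    simp only [hχK x hx.2]
    field_simp
    ring

end LocalConstruction

section Cover

universe u

variable {X : Type u} [TopologicalSpace X]

theorem exists_countable_compact_cover_of_isClosed [T2Space X] [LocallyCompactSpace X]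
    [SigmaCompactSpace X] {s : Set X} (hs : IsClosed s) {O : X → Set X} (hO : ∀ x ∈ s, O x ∈ 𝓝 x) :
    ∃ (ι : Type u) (c : ι → X) (K W L : ι → Set X), Countable ι ∧
      (∀ i, c i ∈ s ∧ IsCompact (K i) ∧ IsOpen (W i) ∧ IsCompact (L i)) ∧
      (∀ i, K i ⊆ W i ∧ W i ⊆ L i ∧ L i ⊆ O (c i)) ∧ s ⊆ ⋃ i, interior (K i) ∧
      ∀ x, ∃ t : Finset ι, ∀ᶠ y in 𝓝 x, ∀ i ∉ t, y ∉ W i := by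
  have hbasis : ∀ x ∈ s,
      (𝓝 x).HasBasis (fun L => L ∈ 𝓝 x ∧ IsCompact L ∧ L ⊆ O x) interior := fun x hx =>
    (compact_basis_nhds x).to_hasBasis'
      (fun L hL => by
        obtain ⟨L', hL', hL'L, hcomp⟩ := local_compact_nhds (inter_mem hL.1 (hO x hx))
        exact ⟨L', ⟨hL', hcomp, hL'L.trans inter_subset_right⟩,
          interior_subset.trans (hL'L.trans inter_subset_left)⟩)
      fun L hL => interior_mem_nhds.2 hL.1
  obtain ⟨ι, c, L, hL, hcover, hfin⟩ :=
    refinement_of_locallyCompact_sigmaCompact_of_nhds_basis_set hs hbasis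
  obtain ⟨v, hsv, hv, hvL⟩ := exists_subset_iUnion_closure_subset hs (fun i => isOpen_interior)
    (fun x _ => hfin.point_finite x) hcover
  refine ⟨ι, c, fun i => closure (v i), fun i => interior (L i), L, ?_, fun i =>
    ⟨(hL i).1, ?_, isOpen_interior, (hL i).2.2.1⟩, fun i =>
    ⟨hvL i, interior_subset, (hL i).2.2.2⟩, ?_, fun x => ?_⟩
  · exact countable_univ_iff.1 (hfin.countable_univ fun i =>
      ⟨c i, mem_interior_iff_mem_nhds.2 (hL i).2.1⟩)
  · exact (hL i).2.2.1.of_isClosed_subset isClosed_closure ((hvL i).trans interior_subset)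
  · exact hsv.trans (iUnion_mono fun i => (hv i).subset_interior_closure)
  · obtain ⟨N, hN, hNfin⟩ := hfin x
    refine ⟨hNfin.toFinset, ?_⟩
    filter_upwards [hN] with y hy i hi hyi
    exact hi (hNfin.mem_toFinset.2 ⟨y, hyi, hy⟩)

theorem exists_countable_compact_cover [T2Space X] [LocallyCompactSpace X]
    [SecondCountableTopology X] {V s : Set X} (hV : IsOpen V) (hsV : s ⊆ V) (hVs : IsOpen (V \ s))
    {O : X → Set X} (hO : ∀ x ∈ s, O x ∈ 𝓝 x) :
    ∃ (ι : Type u) (c : ι → X) (K W L : ι → Set X), Countable ι ∧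
      (∀ i, c i ∈ s ∧ IsCompact (K i) ∧ IsOpen (W i) ∧ IsCompact (L i)) ∧
      (∀ i, K i ⊆ W i ∧ W i ⊆ L i ∧ L i ⊆ V ∩ O (c i)) ∧ s ⊆ ⋃ i, interior (K i) ∧
      ∀ x ∈ V, ∃ t : Finset ι, ∀ᶠ y in 𝓝 x, ∀ i ∉ t, y ∉ W i := by
  have : LocallyCompactSpace V := hV.locallyCompactSpace
  have hval : IsOpenEmbedding ((↑) : V → X) := hV.isOpenEmbedding_subtypeVal
  have hclosed : IsClosed ((↑) ⁻¹' s : Set V) := by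
    rw [← isOpen_compl_iff]
    convert hVs.preimage continuous_subtype_val using 1
    ext x
    simp
  obtain ⟨ι, c, K, W, L, hι, h, hsub, hcover, hfin⟩ :=
    exists_countable_compact_cover_of_isClosed hclosed (O := fun x => (↑) ⁻¹' O x)
      fun x hx => continuous_subtype_val.continuousAt.preimage_mem_nhds (hO x hx)
  refine ⟨ι, fun i => c i, fun i => (↑) '' K i, fun i => (↑) '' W i, fun i => (↑) '' L i, hι,
    fun i => ?_, fun i => ?_, fun x hx => ?_, fun x hx => ?_⟩
  · obtain ⟨hc, hK, hW, hL⟩ := h i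
    exact ⟨hc, hK.image continuous_subtype_val, hval.isOpenMap _ hW,
      hL.image continuous_subtype_val⟩
  · obtain ⟨hKW, hWL, hLO⟩ := hsub i
    exact ⟨image_mono hKW, image_mono hWL,
      image_subset_iff.2 fun x hx => ⟨x.2, hLO hx⟩⟩
  · obtain ⟨i, hi⟩ := mem_iUnion.1 (hcover (show (⟨x, hsV hx⟩ : V) ∈ _ from hx))
    exact mem_iUnion.2 ⟨i, hval.isOpenMap.image_interior_subset _ ⟨_, hi, rfl⟩⟩
  · obtain ⟨t, ht⟩ := hfin ⟨x, hx⟩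
    refine ⟨t, ?_⟩
    rw [← hval.map_nhds_eq ⟨x, hx⟩, eventually_map]
    filter_upwards [ht] with y hy i hi
    rw [hval.injective.mem_set_image]
    exact hy i hi

theorem isCompact_inter_of_isOpen_sdiff {V Z L : Set X} (hL : IsCompact L) (hLV : L ⊆ V)
    (hVZ : IsOpen (V \ Z)) : IsCompact (Z ∩ L) := by
  convert hL.diff hVZ using 1
  grind

end Cover

section Gluing

theorem finsum_eventuallyEq_sum {X ι G : Type*} [TopologicalSpace X] [AddCommMonoid G]
    {ψ : ι → X → G} {x : X} {t : Finset ι} (h : ∀ᶠ y in 𝓝 x, ∀ i ∉ t, ψ i y = 0) :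
    (fun y => ∑ᶠ i, ψ i y) =ᶠ[𝓝 x] ∑ i ∈ t, ψ i := by
  filter_upwards [h] with y hy
  rw [Finset.sum_apply]
  exact finsum_eq_sum_of_support_subset _ (Function.support_subset_iff'.2 hy)

theorem add_sum_pos_of_neg_mul_le {ι : Type*} {t : Finset ι} {f τ : ι → ℝ} {a : ℝ} (ha : 0 < a)
    (hf : ∀ i ∈ t, -τ i * a ≤ f i) (hτ : ∑ i ∈ t, τ i < 1) : 0 < a + ∑ i ∈ t, f i :=
  calc 0 < a * (1 - ∑ i ∈ t, τ i) := mul_pos ha (sub_pos.2 hτ)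
    _ = a + ∑ i ∈ t, -τ i * a := by
      rw [← Finset.sum_mul, Finset.sum_neg_distrib]
      ring
    _ ≤ a + ∑ i ∈ t, f i := by
      gcongr with i hi
      exact hf i hi

universe u

variable {E : Type u} [NormedAddCommGroup E] [NormedSpace ℂ E] {V B Z : Set E} {ρ₀ : E → ℝ}

theorem StronglyPshAt.leviForm_nonneg {ρ : E → ℝ} {x : E} (hx : StronglyPshAt ρ x) (v : E) :
    0 ≤ leviForm ρ x v := by
  rcases eq_or_ne v 0 with rfl | hv
  · simp [leviForm]
  · exact (hx v hv).le

/-- `ψ` corrects `ρ₀` on the part `K` of `B`: adding `ψ` makes the Levi form at least `‖v‖²` there,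
while the loss elsewhere on `B`, and relative to `ρ₀` on `Z`, is at most a fraction `τ`. -/
structure IsLeviCorrection (ρ₀ ψ : E → ℝ) (B Z K : Set E) (τ : ℝ) : Prop where
  contDiff : ContDiff ℝ 2 ψ
  neg_mul_norm_sq_le : ∀ x ∈ B, ∀ v, -τ * ‖v‖ ^ 2 ≤ leviForm ψ x v
  neg_mul_leviForm_le : ∀ x ∈ Z, ∀ v, -τ * leviForm ρ₀ x v ≤ leviForm ψ x v
  norm_sq_le : ∀ x ∈ B ∩ K, ∀ v, ‖v‖ ^ 2 ≤ leviForm ρ₀ x v + leviForm ψ x v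

theorem HasLeviBumps.exists_isLeviCorrection [FiniteDimensional ℂ E] {K W L N : Set E}
    (hN : HasLeviBumps B N) (hV : IsOpen V) (hρ₀ : ContDiffOn ℝ 2 ρ₀ V) (hZB : Z ⊆ B)
    (hVZ : IsOpen (V \ Z)) (hpsh : ∀ x ∈ Z, StronglyPshAt ρ₀ x) (hK : IsCompact K)
    (hW : IsOpen W) (hL : IsCompact L) (hKW : K ⊆ W) (hWL : W ⊆ L) (hLVN : L ⊆ V ∩ N)
    {τ : ℝ} (hτ : 0 < τ) : ∃ ψ, IsLeviCorrection ρ₀ ψ B Z K τ ∧ tsupport ψ ⊆ W := by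
  obtain ⟨hLV, hLN⟩ := subset_inter_iff.1 hLVN
  obtain ⟨δ, hδ, hδ_le⟩ := exists_pos_forall_le_leviForm hV hρ₀
    (isCompact_inter_of_isOpen_sdiff hL hLV hVZ) (inter_subset_right.trans hLV)
    fun x hx => hpsh x hx.1
  obtain ⟨b, hb, hb_le⟩ := exists_forall_abs_leviForm_le hV hρ₀ hK ((hKW.trans hWL).trans hLV)
  obtain ⟨ψ, hψ, hψW, hψ_ge, hψK⟩ := hN hK hW hKW (hWL.trans hLN)
    (add_nonneg hb zero_le_one) (mul_pos hτ (lt_min one_pos hδ))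
  refine ⟨ψ, ⟨hψ, fun x hx v => (hψ_ge x hx v).trans' ?_, fun x hx v => ?_, fun x hx v => ?_⟩, hψW⟩
  · gcongr
    exact mul_le_of_le_one_right hτ.le (min_le_left 1 δ)
  · by_cases hxψ : x ∈ tsupport ψ
    · refine (hψ_ge x (hZB hx) v).trans' ?_
      rw [neg_mul, neg_mul, neg_le_neg_iff, mul_assoc]
      gcongr
      refine (hδ_le x ⟨hx, hWL (hψW hxψ)⟩ v).trans' ?_
      gcongr
      exact min_le_right 1 δ
    · rw [leviForm_eq_zero_of_notMem_tsupport hxψ]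
      exact mul_nonpos_of_nonpos_of_nonneg (neg_nonpos.2 hτ.le) ((hpsh x hx).leviForm_nonneg v)
  · linarith [hψK x hx v, (abs_le.1 (hb_le x hx.2 v)).1]

theorem stronglyPshAt_add_sum {ι : Type*} {ψ : ι → E → ℝ} {K : ι → Set E} {τ : ι → ℝ}
    (hψ : ∀ i, IsLeviCorrection ρ₀ (ψ i) B Z (K i) (τ i)) (hτ : ∀ i, 0 ≤ τ i) {t : Finset ι}
    (hτt : ∑ i ∈ t, τ i < 1) {x : E} (hρ₀ : ContDiffAt ℝ 2 ρ₀ x)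
    (hpsh : ∀ x ∈ Z, StronglyPshAt ρ₀ x) (hx : x ∈ B) (hxt : x ∈ Z ∨ ∃ i ∈ t, x ∈ K i) :
    StronglyPshAt (ρ₀ + ∑ i ∈ t, ψ i) x := by
  classical
  intro v hv
  have hψx (i) : ContDiffAt ℝ 2 (ψ i) x := (hψ i).contDiff.contDiffAt
  rw [leviForm_add hρ₀ (Finset.sum_fn t ψ ▸ ContDiffAt.sum fun i _ => hψx i),
    leviForm_sum fun i _ => hψx i]
  rcases hxt with hxZ | ⟨i, hi, hxK⟩
  · exact add_sum_pos_of_neg_mul_le (hpsh x hxZ v hv)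
      (fun i _ => (hψ i).neg_mul_leviForm_le x hxZ v) hτt
  · have hmain := (hψ i).norm_sq_le x ⟨hx, hxK⟩ v
    rw [← Finset.add_sum_erase t _ hi, ← add_assoc]
    refine add_sum_pos_of_neg_mul_le (τ := τ) ((pow_pos (norm_pos_iff.2 hv) 2).trans_le hmain)
      (fun j _ => ((hψ j).neg_mul_norm_sq_le x hx v).trans' ?_)
      ((Finset.sum_le_sum_of_subset_of_nonneg (t.erase_subset i) fun j _ _ => hτ j).trans_lt hτt)
    exact mul_le_mul_of_nonpos_left hmain (neg_nonpos.2 (hτ j))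

variable [FiniteDimensional ℂ E]

theorem exists_locallyFinite_isLeviCorrection (hV : IsOpen V) (hBV : B ⊆ V) (hVB : IsOpen (V \ B))
    (hρ₀ : ContDiffOn ℝ 2 ρ₀ V)
    (hbumps : ∀ p ∈ B, ¬ StronglyPshAt ρ₀ p → ∃ N ∈ 𝓝 p, HasLeviBumps B N) :
    ∃ (Z : Set E) (ι : Type u) (ψ : ι → E → ℝ) (K : ι → Set E) (τ : ι → ℝ),
      (∀ x ∈ Z, StronglyPshAt ρ₀ x) ∧ (∀ i, IsLeviCorrection ρ₀ (ψ i) B Z (K i) (τ i)) ∧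
      (∀ i, 0 ≤ τ i) ∧ (∀ t : Finset ι, ∑ i ∈ t, τ i < 1) ∧
      ∀ x ∈ V, ∃ t : Finset ι, (x ∈ B → x ∈ Z ∨ ∃ i ∈ t, x ∈ K i) ∧
        ∀ᶠ y in 𝓝 x, ∀ i ∉ t, ψ i y = 0 := by
  have : ProperSpace E := FiniteDimensional.proper ℂ E
  let s := {x ∈ B | ¬ StronglyPshAt ρ₀ x}
  have hVs : IsOpen (V \ s) := by
    convert hVB.union (isOpen_setOf_stronglyPshAt hV hρ₀) using 1
    ext x
    simp only [s, Set.mem_sdiff, mem_union, mem_ofPred_eq]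
    tauto
  choose! N hN hNbumps using fun p (hp : p ∈ s) => hbumps p hp.1 hp.2
  obtain ⟨ι, c, K, W, L, hι, hcover, hsub, hsK, hfin⟩ :=
    exists_countable_compact_cover hV (fun x hx => hBV hx.1) hVs hN
  let Z := B \ ⋃ i, interior (K i)
  have hVZ : IsOpen (V \ Z) := by
    convert hVB.union (hV.inter (isOpen_iUnion fun i => isOpen_interior (s := K i))) using 1
    grind
  have hpsh : ∀ x ∈ Z, StronglyPshAt ρ₀ x := fun x hx => by_contra fun h => hx.2 (hsK ⟨hx.1, h⟩)
  obtain ⟨τ, hτ, hτsum⟩ := (countable_univ (α := ι)).exists_pos_forall_sum_le one_half_pos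
  choose ψ hψ hψW using fun i =>
    (hNbumps _ (hcover i).1).exists_isLeviCorrection hV hρ₀ sdiff_subset hVZ hpsh (hcover i).2.1
      (hcover i).2.2.1 (hcover i).2.2.2 (hsub i).1 (hsub i).2.1 (hsub i).2.2 (hτ i)
  refine ⟨Z, ι, ψ, K, τ, hpsh, hψ, fun i => (hτ i).le,
    fun t => (hτsum t (subset_univ _)).trans_lt one_half_lt_one, fun x hx => ?_⟩
  obtain ⟨t, ht⟩ := hfin x hx
  refine ⟨t, fun hxB => or_iff_not_imp_left.2 fun hxZ => ?_, ?_⟩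
  · obtain ⟨i, hi⟩ := mem_iUnion.1 (not_not.1 fun h => hxZ ⟨hxB, h⟩)
    have hxK : x ∈ K i := interior_subset hi
    exact ⟨i, by_contra fun hit => ht.self_of_nhds i hit ((hsub i).1 hxK), hxK⟩
  · filter_upwards [ht] with y hy i hi
    exact image_eq_zero_of_notMem_tsupport fun h => hy i hi (hψW i h)

theorem exists_stronglyPshAt_of_hasLeviBumps (hV : IsOpen V) (hBV : B ⊆ V) (hVB : IsOpen (V \ B))
    (hρ₀ : ContDiffOn ℝ 2 ρ₀ V)
    (hbumps : ∀ p ∈ B, ¬ StronglyPshAt ρ₀ p → ∃ N ∈ 𝓝 p, HasLeviBumps B N) :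
    ∃ ρ : E → ℝ, ContDiffOn ℝ 2 ρ V ∧ ∀ x ∈ B, StronglyPshAt ρ x := by
  obtain ⟨Z, ι, ψ, K, τ, hpsh, hψ, hτ, hτsum, hfin⟩ :=
    exists_locallyFinite_isLeviCorrection hV hBV hVB hρ₀ hbumps
  let ρ : E → ℝ := ρ₀ + fun y => ∑ᶠ i, ψ i y
  have hρ_eq {x : E} {t : Finset ι} (ht : ∀ᶠ y in 𝓝 x, ∀ i ∉ t, ψ i y = 0) :
      ρ =ᶠ[𝓝 x] ρ₀ + ∑ i ∈ t, ψ i := EventuallyEq.rfl.add (finsum_eventuallyEq_sum ht)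
  have hρ₀_at {x : E} (hx : x ∈ V) : ContDiffAt ℝ 2 ρ₀ x := hρ₀.contDiffAt (hV.mem_nhds hx)
  refine ⟨ρ, fun x hx => ?_, fun x hx => ?_⟩
  · obtain ⟨t, -, ht⟩ := hfin x hx
    refine (ContDiffAt.congr_of_eventuallyEq ?_ (hρ_eq ht)).contDiffWithinAt
    rw [Finset.sum_fn]
    exact (hρ₀_at hx).add (ContDiffAt.sum fun i _ => (hψ i).contDiff.contDiffAt)
  · obtain ⟨t, hxt, ht⟩ := hfin x (hBV hx)
    intro v hv
    rw [leviForm_congr (hρ_eq ht)]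
    exact stronglyPshAt_add_sum hψ hτ (hτsum t) (hρ₀_at (hBV hx)) hpsh hx (hxt hx) v hv

end Gluing

section Stratification

theorem exists_isTotallyReal_isStrictlyTangentAt_of_chart {E G : Type*} [NormedAddCommGroup E]
    [NormedSpace ℂ E] [NormedAddCommGroup G] [NormedSpace ℝ G] [FiniteDimensional ℝ G]
    {M V : Set E} {Ω : Set G} {g : G → E} {g' : E → G} {p : E} (hV : IsOpen V)
    (hpM : p ∈ M) (hpV : p ∈ V) (hΩ : IsOpen Ω) (hg : ContDiffOn ℝ 1 g Ω) (himage : g '' Ω = M ∩ V)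
    (hg' : ContinuousOn g' (M ∩ V)) (hleft : ∀ t ∈ Ω, g' (g t) = t)
    (hderiv : ∀ t ∈ Ω, Function.Injective (fderivWithin ℝ g Ω t) ∧
      ∀ v ∈ range (fderivWithin ℝ g Ω t),
        Complex.I • v ∈ range (fderivWithin ℝ g Ω t) → v = 0) :
    ∃ T, IsTotallyReal T ∧ IsStrictlyTangentAt M T p := by
  have hp : p ∈ M ∩ V := ⟨hpM, hpV⟩
  obtain ⟨t, ht, rfl⟩ : p ∈ g '' Ω := himage ▸ hp
  obtain ⟨hinj, hreal⟩ := hderiv t ht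
  rw [fderivWithin_of_isOpen hΩ ht] at hinj hreal
  have hnhds : 𝓝[M ∩ V] g t = 𝓝[M] g t :=
    nhdsWithin_inter_of_mem' (mem_nhdsWithin_of_mem_nhds (hV.mem_nhds hpV))
  have hstrict : HasStrictFDerivAt g (fderiv ℝ g t) t :=
    (hg.contDiffAt (hΩ.mem_nhds ht)).hasStrictFDerivAt one_ne_zero
  refine ⟨LinearMap.range (fderiv ℝ g t : G →ₗ[ℝ] E), hreal,
    isStrictlyTangentAt_range_of_hasStrictFDerivAt hstrict hinj (g' := g') ?_ ?_⟩ <;> rw [← hnhds]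
  · simpa only [hleft t ht] using (hg' (g t) hp).tendsto
  · filter_upwards [self_mem_nhdsWithin] with x hx
    obtain ⟨s, hs, rfl⟩ : x ∈ g '' Ω := himage ▸ hx
    rw [hleft s hs]

variable {E : Type*} [NormedAddCommGroup E] [NormedSpace ℂ E] [FiniteDimensional ℂ E]

theorem exists_stronglyPshAt_extend_stratum {V A B : Set E} {ρ₀ : E → ℝ} (hV : IsOpen V)
    (hBV : B ⊆ V) (hVB : IsOpen (V \ B)) (hVA : IsOpen (V \ A)) (hρ₀ : ContDiffOn ℝ 2 ρ₀ V)
    (hpsh : ∀ x ∈ A, StronglyPshAt ρ₀ x)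
    (htangent : ∀ p ∈ B \ A, ∃ T, IsTotallyReal T ∧ IsStrictlyTangentAt (B \ A) T p) :
    ∃ ρ : E → ℝ, ContDiffOn ℝ 2 ρ V ∧ ∀ x ∈ B, StronglyPshAt ρ x := by
  refine exists_stronglyPshAt_of_hasLeviBumps hV hBV hVB hρ₀ fun p hpB hp => ?_
  have hpA : p ∉ A := fun hpA => hp (hpsh p hpA)
  obtain ⟨T, hT, hTp⟩ := htangent p ⟨hpB, hpA⟩
  obtain ⟨N, hN, hbumps⟩ := hT.exists_hasLeviBumps hTp
  refine ⟨N \ A, ?_, hbumps.of_sdiff⟩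
  filter_upwards [hN, hVA.mem_nhds ⟨hBV hpB, hpA⟩] with x hxN hxA
  exact ⟨hxN, hxA.2⟩

theorem spsh_function_near_stratified_totally_real_set_general {S : Set E} {F : ℕ → Set E} {n : ℕ}
    (hS : IsLocallyClosed S) (hF0 : F 0 = S) (hFn : F n = ∅)
    (hclosed : ∀ k ≤ n, ∃ C, IsClosed C ∧ F k = S ∩ C)
    (htangent : ∀ k < n, ∀ p ∈ F k \ F (k + 1),
      ∃ T, IsTotallyReal T ∧ IsStrictlyTangentAt (F k \ F (k + 1)) T p) :
    ∃ U, IsOpen U ∧ S ⊆ U ∧ ∃ ρ : E → ℝ, ContDiffOn ℝ 2 ρ U ∧ ∀ x ∈ U, StronglyPshAt ρ x := by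
  obtain ⟨V, Z, hV, hZ, rfl⟩ := hS
  have hFV : ∀ k ≤ n, F k ⊆ V ∧ IsOpen (V \ F k) := fun k hk => by
    obtain ⟨C, hC, h⟩ := hclosed k hk
    rw [h, inter_assoc, sdiff_self_inter]
    exact ⟨inter_subset_left, hV.sdiff (hZ.inter hC)⟩
  obtain ⟨ρ, hρ, hρF⟩ : ∃ ρ : E → ℝ, ContDiffOn ℝ 2 ρ V ∧ ∀ x ∈ F 0, StronglyPshAt ρ x := by
    refine Nat.decreasingInduction
      (motive := fun k _ => ∃ ρ : E → ℝ, ContDiffOn ℝ 2 ρ V ∧ ∀ x ∈ F k, StronglyPshAt ρ x)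
      (fun k hk ⟨ρ, hρ, hρF⟩ => ?_) ⟨0, contDiffOn_const, by simp [hFn]⟩ n.zero_le
    exact exists_stronglyPshAt_extend_stratum hV (hFV k hk.le).1 (hFV k hk.le).2
      (hFV (k + 1) hk).2 hρ hρF (htangent k hk)
  exact ⟨{x ∈ V | StronglyPshAt ρ x}, isOpen_setOf_stronglyPshAt hV hρ,
    fun x hx => ⟨hx.1, hρF x (hF0 ▸ hx)⟩, ρ, hρ.mono fun x hx => hx.1, fun x hx => hx.2⟩

end Stratification

/-- Proposition 2.1 of the paper. Let `S ⊆ ℂⁿ` be a locally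
closed set with a finite filtration `S = F 0 ⊇ F 1 ⊇ ⋯ ⊇ F m ⊇ F (m+1) = ∅` by
subsets closed in `S`, such that each difference `F k \ F (k+1)` (for `k ≤ m`) is a
totally real `C¹` embedded submanifold of `ℂⁿ` (possibly with components of
different dimensions): every point `p` of it has an open neighborhood `V` in `ℂⁿ`
such that `(F k \ F (k+1)) ∩ V` is the image of a `C¹` map `g` on an open set
`Ω ⊆ ℝᵈ` which is a homeomorphism onto it (witnessed by a continuous left inverse
`g'`), whose derivative is injective with totally real range at every point of `Ω`.
Then some open set `U ⊇ S` carries a `C²` function which is strongly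
plurisubharmonic at every point of `U`. -/
theorem spsh_function_near_stratified_totally_real_set
    (n m : ℕ) (S : Set (EuclideanSpace ℂ (Fin n)))
    (F : ℕ → Set (EuclideanSpace ℂ (Fin n)))
    (hlc : ∃ (V : Set (EuclideanSpace ℂ (Fin n))) (C : Set (EuclideanSpace ℂ (Fin n))),
      IsOpen V ∧ IsClosed C ∧ S = V ∩ C)
    (hF0 : F 0 = S)
    (hanti : ∀ k ≤ m, F (k + 1) ⊆ F k)
    (hempty : F (m + 1) = ∅)
    (hclosed : ∀ k ≤ m + 1, ∃ C : Set (EuclideanSpace ℂ (Fin n)),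
      IsClosed C ∧ F k = S ∩ C)
    (hchart : ∀ k ≤ m, ∀ p ∈ F k \ F (k + 1),
      ∃ V : Set (EuclideanSpace ℂ (Fin n)), IsOpen V ∧ p ∈ V ∧
      ∃ (d : ℕ) (Ω : Set (EuclideanSpace ℝ (Fin d)))
        (g : EuclideanSpace ℝ (Fin d) → EuclideanSpace ℂ (Fin n))
        (g' : EuclideanSpace ℂ (Fin n) → EuclideanSpace ℝ (Fin d)),
        IsOpen Ω ∧ ContDiffOn ℝ 1 g Ω ∧ g '' Ω = (F k \ F (k + 1)) ∩ V ∧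
        ContinuousOn g' ((F k \ F (k + 1)) ∩ V) ∧ (∀ t ∈ Ω, g' (g t) = t) ∧
        ∀ t ∈ Ω, Function.Injective ⇑(fderivWithin ℝ g Ω t) ∧
          ∀ v ∈ Set.range ⇑(fderivWithin ℝ g Ω t),
            Complex.I • v ∈ Set.range ⇑(fderivWithin ℝ g Ω t) → v = 0) :
    ∃ U : Set (EuclideanSpace ℂ (Fin n)), IsOpen U ∧ S ⊆ U ∧
      ∃ ρ : EuclideanSpace ℂ (Fin n) → ℝ, ContDiffOn ℝ 2 ρ U ∧
        ∀ x ∈ U, ∀ v, v ≠ 0 → 0 < leviForm ρ x v := by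
  refine spsh_function_near_stratified_totally_real_set_general hlc hF0 hempty hclosed
    fun k hk p hp => ?_
  obtain ⟨V, hV, hpV, d, Ω, g, g', hΩ, hg, himage, hg', hleft, hderiv⟩ :=
    hchart k (Nat.lt_succ_iff.1 hk) p hp
  exact exists_isTotallyReal_isStrictlyTangentAt_of_chart hV hp hpV hΩ hg himage hg' hleft hderiv
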